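/- Let G = (V, E, x) be a finite connected rooted graph. Then: (i) for every vertex i ∈ V, the map λ ↦ Var^{IV-GFF}_{G,λ}[φ(i)] is decreasing on (0,∞)^E with respect to the coordinatewise partial order on conductances; and (ii) for every pair of vertices i,j ∈ V, the map λ ↦ Var^{IV-GFF}_{G,λ}[φ(i) − φ(j)] is decreasing on (0,∞)^E with respect to the coordinatewise partial order on conductances. -/

import Mathlib

open scoped ENNReal

noncomputable section

/-- The graph on `V` whose edges are the pairs of distinct vertices carrying a positive
conductance. -/
def supportGraph {V : Type*} (c : V → V → ℝ) : SimpleGraph V :=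
  SimpleGraph.fromRel (fun a b => 0 < c a b)

/-- Configurations of the integer-valued Gaussian free field on the rooted graph with
conductances `c` and root `x`: integer-valued height functions vanishing at the root and
(by convention) outside the connected component of the root. -/
def GffConfig {V : Type*} (c : V → V → ℝ) (x : V) : Type _ :=
  {φ : V → ℤ // φ x = 0 ∧ ∀ v : V, ¬ (supportGraph c).Reachable x v → φ v = 0}

/-- Boltzmann weight `exp(−∑_{ij∈E} λ_{ij}(φ(i)−φ(j))²)` of a configuration (each
unordered pair is counted once, whence the factor `1/2` in the ordered sum). -/
def gffWeight {V : Type*} [Fintype V] (c : V → V → ℝ) (φ : V → ℤ) : ℝ :=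
  Real.exp (-((1 : ℝ) / 2 * ∑ i : V, ∑ j : V, c i j * ((φ i - φ j : ℤ) : ℝ) ^ 2))

/-- Partition function of the integer-valued Gaussian free field. -/
def gffZ {V : Type*} [Fintype V] (c : V → V → ℝ) (x : V) : ℝ :=
  ∑' φ : GffConfig c x, gffWeight c φ.val

/-- Variance of an observable `f` under the integer-valued Gaussian free field
(real-valued formula, meaningful on the connected component of the root). -/
def gffRVar {V : Type*} [Fintype V] (c : V → V → ℝ) (x : V) (f : (V → ℤ) → ℝ) : ℝ :=
  (∑' φ : GffConfig c x, f φ.val ^ 2 * gffWeight c φ.val) / gffZ c x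
    - ((∑' φ : GffConfig c x, f φ.val * gffWeight c φ.val) / gffZ c x) ^ 2

open scoped Classical in
/-- Variance of the height `φ(i)` under the integer-valued Gaussian free field, set to
`∞` when `i` is not connected to the root. -/
def gffVar1 {V : Type*} [Fintype V] (c : V → V → ℝ) (x : V) (i : V) : ℝ≥0∞ :=
  if (supportGraph c).Reachable x i then
    ENNReal.ofReal (gffRVar c x fun φ => ((φ i : ℤ) : ℝ))
  else ⊤

open scoped Classical in
/-- Variance of the height difference `φ(i) − φ(j)` under the integer-valued Gaussian
free field, set to `∞` when `i` or `j` is not connected to the root. -/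
def gffVar2 {V : Type*} [Fintype V] (c : V → V → ℝ) (x : V) (i j : V) : ℝ≥0∞ :=
  if (supportGraph c).Reachable x i ∧ (supportGraph c).Reachable x j then
    ENNReal.ofReal (gffRVar c x fun φ => ((φ i : ℤ) : ℝ) - ((φ j : ℤ) : ℝ))
  else ⊤

end

/-!
The configurations form a lattice `L` on which the Dirichlet energy is a quadratic form `Q`. The
weights `exp (-Q)` are even, so the variance of a linear observable `f` is its second moment.
Raising the conductance of an edge adds `d * g ^ 2` to `Q`, where `g` is the height difference along
that edge, and `exp (-d * g ^ 2)` is the average of `cos (t * g)` over a Gaussian `t`. So it is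
enough that `f ^ 2` and `cos (t * g)` are negatively correlated. By the parallelogram law, the
covariance is, up to a negative factor, the sum over two independent copies `u`, `v` of
`F (u + v) * F (u - v)`, where `F = f * exp (-Q / 2) * sin (t * g / 2)`; and as `(u + v, u - v)`
ranges over the pairs of points congruent modulo `2L`, this is a sum of squares over `L ⧸ 2L`.

If the larger conductances connect more vertices to the root, then the lattice itself grows, and the
smaller one is a retract of it.
-/

section LatticeGaussian

open Asymptotics Filter MeasureTheory ProbabilityTheory Real Topology
open QuadraticMap (linMulLin linMulLin_apply polar_neg_right)

variable {L L' : Type*} [AddCommGroup L'] [AddCommGroup L]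

/-- The subgroup `2L` of doubles, whose cosets index the sum of squares in
`tsum_mul_add_sub_nonneg`. -/
abbrev doubles (L : Type*) [AddCommGroup L] : AddSubgroup L := (nsmulAddMonoidHom 2).range

lemma add_sub_injective [IsAddTorsionFree L] :
    Function.Injective fun p : L × L => (p.1 + p.2, p.1 - p.2) := by
  rintro ⟨u, v⟩ ⟨u', v'⟩ h
  obtain ⟨hadd, hsub⟩ := Prod.mk.inj h
  have hu : u = u' := nsmul_right_injective two_ne_zero <| by
    calc 2 • u = (u + v) + (u - v) := by abel
      _ = (u' + v') + (u' - v') := congrArg₂ _ hadd hsub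
      _ = 2 • u' := by abel
  subst hu
  exact congrArg _ (add_left_cancel hadd)

lemma bijOn_add_sub_coset [IsAddTorsionFree L] (q : L ⧸ doubles L) :
    Set.BijOn (fun p : L × L => (p.1 + p.2, p.1 - p.2))
      ((fun p : L × L => ((p.1 + p.2 : L) : L ⧸ doubles L)) ⁻¹' {q})
      ((QuotientAddGroup.mk ⁻¹' {q}) ×ˢ (QuotientAddGroup.mk ⁻¹' {q})) := by
  refine ⟨?_, add_sub_injective.injOn, ?_⟩
  · rintro ⟨u, v⟩ huv
    have hsub : ((u - v : L) : L ⧸ doubles L) = ((u + v : L) : L ⧸ doubles L) :=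
      QuotientAddGroup.eq.mpr ⟨v, by simp only [nsmulAddMonoidHom_apply]; abel⟩
    exact ⟨huv, hsub.trans huv⟩
  · rintro ⟨a, b⟩ ⟨ha, hb⟩
    obtain ⟨v, hv⟩ := QuotientAddGroup.eq.mp (hb.trans ha.symm)
    have hab : b + v + v = a := by
      rw [add_assoc, ← two_nsmul, ← nsmulAddMonoidHom_apply, hv]
      abel
    have hmem : ((b + v + v : L) : L ⧸ doubles L) = q := hab ▸ ha
    exact ⟨(b + v, v), hmem, Prod.ext hab (add_sub_cancel_right b v)⟩

-- The sum is the sum over the cosets of `2L` of the squares of the coset sums of `F`.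
lemma tsum_mul_add_sub_nonneg [IsAddTorsionFree L] {F : L → ℝ} (hF : Summable F) :
    0 ≤ ∑' p : L × L, F (p.1 + p.2) * F (p.1 - p.2) := by
  have hprod : Summable fun p : L × L => F p.1 * F p.2 :=
    summable_mul_of_summable_norm hF.norm hF.norm
  have hsum : Summable fun p : L × L => F (p.1 + p.2) * F (p.1 - p.2) :=
    (hprod.comp_injective add_sub_injective :)
  rw [← (hsum.hasSum.tsum_fiberwise
    fun p : L × L => ((p.1 + p.2 : L) : L ⧸ doubles L)).tsum_eq]
  refine tsum_nonneg fun q => ?_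
  let coset : Set L := QuotientAddGroup.mk ⁻¹' {q}
  have hcoset : Summable fun a : coset => ‖F a‖ := hF.norm.subtype _
  calc 0 ≤ (∑' a : coset, F a) * ∑' b : coset, F b := mul_self_nonneg _
    _ = ∑' p : coset × coset, F p.1 * F p.2 := tsum_mul_tsum_of_summable_norm hcoset hcoset
    _ = _ := ((((bijOn_add_sub_coset q).equiv _).trans (Equiv.Set.prod _ _)).tsum_eq
        fun p : coset × coset => F p.1 * F p.2).symm

lemma tsum_eq_zero_of_odd {F : L → ℝ} (hF : F.Odd) : ∑' u, F u = 0 := by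
  have h := (Equiv.neg L).tsum_eq F
  simp only [Equiv.neg_apply, hF _, tsum_neg] at h
  linarith

lemma map_add_add_map_sub (Q : QuadraticMap ℤ L ℝ) (u v : L) :
    Q (u + v) + Q (u - v) = 2 * Q u + 2 * Q v := by
  rw [sub_eq_add_neg, QuadraticMap.map_add Q u v, QuadraticMap.map_add Q u (-v),
    Q.map_neg, polar_neg_right]
  ring

lemma exp_neg_half_mul_exp_neg_half (Q : QuadraticMap ℤ L ℝ) (u v : L) :
    exp (-(1 / 2 * Q (u + v))) * exp (-(1 / 2 * Q (u - v))) = exp (-Q u) * exp (-Q v) := by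
  rw [← exp_add, ← exp_add]
  congr 1
  linarith [map_add_add_map_sub Q u v]

lemma sin_half_add_mul_sin_half_sub (a b : ℝ) :
    2 * (sin ((a + b) / 2) * sin ((a - b) / 2)) = cos b - cos a := by
  rw [cos_sub_cos, add_comm b a, ← neg_sub a b, neg_div, sin_neg]
  ring

lemma summable_mul_of_abs_le_one {ι : Type*} {a b : ι → ℝ} (ha : Summable a)
    (hb : ∀ u, |b u| ≤ 1) : Summable fun u => a u * b u :=
  Summable.of_norm_bounded ha.norm fun u => by
    rw [norm_mul]
    exact mul_le_of_le_one_right (norm_nonneg _) (hb u)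

lemma integral_cos_mul_gaussianReal (v : NNReal) (y : ℝ) :
    ∫ t, cos (t * y) ∂gaussianReal 0 v = exp (-(v / 2 * y ^ 2)) := by
  have hint : Integrable (fun t : ℝ => Complex.exp (y * t * Complex.I)) (gaussianReal 0 v) :=
    .of_bound (C := 1) (by fun_prop) <| .of_forall fun t => by
      rw [← Complex.ofReal_mul, Complex.norm_exp_ofReal_mul_I]
  have hre (t : ℝ) : (Complex.exp (y * t * Complex.I)).re = cos (t * y) := by
    rw [← Complex.ofReal_mul, Complex.exp_ofReal_mul_I_re, mul_comm]
  calc ∫ t, cos (t * y) ∂gaussianReal 0 v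
      = (charFun (gaussianReal 0 v) y).re := by
        rw [charFun_apply_real]
        simpa only [RCLike.re_eq_complex_re, hre] using integral_re hint
    _ = (Complex.exp ((-(v / 2 * y ^ 2) : ℝ) : ℂ)).re := by
        rw [charFun_gaussianReal]
        congr 2
        push_cast
        ring
    _ = exp (-(v / 2 * y ^ 2)) := Complex.exp_ofReal_re _

section CosineSeries

variable {ι : Type*} {a : ι → ℝ} (g : ι → ℝ) (μ : Measure ℝ) [IsFiniteMeasure μ]

lemma norm_mul_cos_le (b y : ℝ) : ‖b * cos y‖ ≤ ‖b‖ := by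
  rw [norm_mul]
  exact mul_le_of_le_one_right (norm_nonneg _) (abs_cos_le_one _)

lemma integrable_tsum_mul_cos (ha : Summable a) :
    Integrable (fun t => ∑' u, a u * cos (t * g u)) μ := by
  have hcont : Continuous fun t => ∑' u, a u * cos (t * g u) :=
    continuous_tsum (fun u => by fun_prop) ha.norm fun u t => norm_mul_cos_le _ _
  exact .of_bound (C := ∑' u, ‖a u‖) hcont.aestronglyMeasurable <|
    .of_forall fun t => tsum_of_norm_bounded ha.norm.hasSum fun u => norm_mul_cos_le _ _

lemma integral_tsum_mul_cos [Countable ι] (ha : Summable a) :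
    ∫ t, ∑' u, a u * cos (t * g u) ∂μ = ∑' u, a u * ∫ t, cos (t * g u) ∂μ := by
  have hint (u : ι) : Integrable (fun t => a u * cos (t * g u)) μ :=
    .of_bound (C := ‖a u‖) (by fun_prop) <| .of_forall fun t => norm_mul_cos_le _ _
  have hsum : Summable fun u => ∫ t, ‖a u * cos (t * g u)‖ ∂μ := by
    refine .of_nonneg_of_le (fun u => integral_nonneg fun t => norm_nonneg _) (fun u => ?_)
      (ha.norm.mul_left (μ.real Set.univ))
    calc ∫ t, ‖a u * cos (t * g u)‖ ∂μ
        ≤ ∫ _, ‖a u‖ ∂μ :=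
          integral_mono (hint u).norm (integrable_const _) fun t => norm_mul_cos_le _ _
      _ = μ.real Set.univ * ‖a u‖ := by simp
  simp_rw [← integral_tsum_of_summable_integral_norm hint hsum, integral_const_mul]

end CosineSeries

/-- Convergence, at every temperature, of the Gaussian sums of a nonnegative quadratic form on a
lattice. -/
structure IsSummableGaussian (Q : QuadraticMap ℤ L ℝ) : Prop where
  nonneg : ∀ u, 0 ≤ Q u
  summable_exp_mul : ∀ ε > 0, Summable fun u => exp (-(ε * Q u))

/-- The second moment of the observable `f` under the discrete Gaussian measure on the lattice `L`
with weights `exp (-Q u)`. -/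
noncomputable def gaussianSecondMoment (Q : QuadraticMap ℤ L ℝ) (f : L → ℝ) : ℝ :=
  (∑' u, f u ^ 2 * exp (-Q u)) / ∑' u, exp (-Q u)

lemma pow_mul_exp_neg_mul_sq_le {ε : ℝ} (hε : 0 < ε) (n : ℕ) {y : ℝ} (hy : 0 ≤ y) :
    y ^ n * exp (-(ε * y ^ 2)) ≤ n.factorial * exp (1 / (2 * ε)) * exp (-(ε / 2 * y ^ 2)) := by
  have hlin : y ≤ 1 / (2 * ε) + ε / 2 * y ^ 2 := by
    have hsq : 1 / (2 * ε) + ε / 2 * y ^ 2 - y = (ε * y - 1) ^ 2 / (2 * ε) := by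
      field_simp
      ring
    linarith [show 0 ≤ (ε * y - 1) ^ 2 / (2 * ε) by positivity]
  have hpow : y ^ n ≤ n.factorial * exp y := by
    rw [← div_le_iff₀' (by positivity)]
    exact pow_div_factorial_le_exp y hy n
  calc y ^ n * exp (-(ε * y ^ 2))
      ≤ n.factorial * exp (1 / (2 * ε) + ε / 2 * y ^ 2) * exp (-(ε * y ^ 2)) := by
        gcongr
        exact hpow.trans (by gcongr)
    _ = n.factorial * exp (1 / (2 * ε)) * exp (-(ε / 2 * y ^ 2)) := by
        rw [mul_assoc, mul_assoc, ← exp_add, ← exp_add]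
        ring_nf

namespace IsSummableGaussian

variable {Q Q' : QuadraticMap ℤ L ℝ} {f : L → ℝ}

lemma summable_exp (hQ : IsSummableGaussian Q) : Summable fun u => exp (-Q u) := by
  simpa only [one_mul] using hQ.summable_exp_mul 1 one_pos

lemma tsum_exp_pos (hQ : IsSummableGaussian Q) : 0 < ∑' u, exp (-Q u) :=
  hQ.summable_exp.tsum_pos (fun _ => (exp_pos _).le) 0 (exp_pos _)

lemma mono (hQ : IsSummableGaussian Q) (h : ∀ u, Q u ≤ Q' u) : IsSummableGaussian Q' where
  nonneg u := (hQ.nonneg u).trans (h u)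
  summable_exp_mul ε hε := (hQ.summable_exp_mul ε hε).of_nonneg_of_le (fun _ => (exp_pos _).le)
    fun u => by gcongr; exact h u

lemma summable_pow_mul_exp_mul (hQ : IsSummableGaussian Q) (hf : f =O[⊤] fun u => √(Q u))
    (n : ℕ) {ε : ℝ} (hε : 0 < ε) : Summable fun u => f u ^ n * exp (-(ε * Q u)) := by
  have hsqrt : (fun u => √(Q u) ^ n * exp (-(ε * Q u))) =O[⊤] fun u => exp (-(ε / 2 * Q u)) :=
    .of_bound (n.factorial * exp (1 / (2 * ε))) <| .of_forall fun u => by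
      have h := pow_mul_exp_neg_mul_sq_le hε n (sqrt_nonneg (Q u))
      rw [sq_sqrt (hQ.nonneg u)] at h
      rwa [norm_of_nonneg (by positivity), norm_of_nonneg (exp_pos _).le]
  exact summable_of_isBigO (hQ.summable_exp_mul (ε / 2) (by positivity)) <|
    (((hf.pow n).mul (isBigO_refl _ _)).trans hsqrt).mono le_top

lemma summable_sq_mul_exp (hQ : IsSummableGaussian Q) (hf : f =O[⊤] fun u => √(Q u)) :
    Summable fun u => f u ^ 2 * exp (-Q u) := by
  simpa only [one_mul] using hQ.summable_pow_mul_exp_mul hf 2 one_pos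

end IsSummableGaussian

lemma summable_exp_neg_mul_intCast_sq {ε : ℝ} (hε : 0 < ε) :
    Summable fun n : ℤ => exp (-(ε * (n : ℝ) ^ 2)) := by
  have hnat : Summable fun n : ℕ => exp (-(ε * (n : ℝ) ^ 2)) := by
    refine (summable_exp_nat_mul_iff.mpr (neg_lt_zero.mpr hε)).of_nonneg_of_le
      (fun n => (exp_pos _).le) fun n => exp_le_exp.mpr ?_
    have hn : (n : ℝ) ≤ (n : ℝ) ^ 2 := mod_cast Nat.le_self_pow two_ne_zero n
    linarith [mul_le_mul_of_nonneg_left hn hε.le]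
  exact .of_nat_of_neg (by simpa using hnat) (by simpa using hnat)

lemma summable_prod_pi {ι κ : Type*} [Fintype ι] {a : κ → ℝ} (ha₀ : ∀ n, 0 ≤ a n)
    (ha : Summable a) : Summable fun u : ι → κ => ∏ i, a (u i) := by
  classical
  refine summable_of_sum_le (c := ∏ _i : ι, ∑' n, a n)
    (fun u => Finset.prod_nonneg fun i _ => ha₀ _) fun s => ?_
  have hsub : s ⊆ Fintype.piFinset fun i => s.image fun u => u i := fun u hu =>
    Fintype.mem_piFinset.mpr fun i => Finset.mem_image_of_mem _ hu
  calc ∑ u ∈ s, ∏ i, a (u i)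
      ≤ ∑ u ∈ Fintype.piFinset fun i => s.image fun u => u i, ∏ i, a (u i) :=
        Finset.sum_le_sum_of_subset_of_nonneg hsub fun u _ _ => Finset.prod_nonneg fun i _ => ha₀ _
    _ = ∏ i, ∑ n ∈ s.image fun u => u i, a n := by rw [Finset.prod_univ_sum]
    _ ≤ ∏ _i : ι, ∑' n, a n :=
        Finset.prod_le_prod (fun i _ => Finset.sum_nonneg fun n _ => ha₀ n)
          fun i _ => ha.sum_le_tsum _ fun n _ => ha₀ n

lemma isSummableGaussian_of_isBigO_sqrt {ι : Type*} [Finite ι]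
    {Q : QuadraticMap ℤ L ℝ} (hQ : ∀ u, 0 ≤ Q u) {e : L → ι → ℤ} (he : Function.Injective e)
    (hcoord : ∀ i, (fun u => (e u i : ℝ)) =O[⊤] fun u => √(Q u)) : IsSummableGaussian Q where
  nonneg := hQ
  summable_exp_mul ε hε := by
    have := Fintype.ofFinite ι
    have hsum : (fun u => ∑ i, (e u i : ℝ) ^ 2) =O[⊤] fun u => √(Q u) ^ 2 :=
      .fun_sum fun i _ => (hcoord i).pow 2
    obtain ⟨C, hC, hbound⟩ := hsum.exists_pos
    have hle (u : L) : ε / C * ∑ i, (e u i : ℝ) ^ 2 ≤ ε * Q u := by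
      have h := isBigOWith_top.mp hbound u
      rw [sq_sqrt (hQ u), norm_of_nonneg (by positivity), norm_of_nonneg (hQ u)] at h
      calc ε / C * ∑ i, (e u i : ℝ) ^ 2 ≤ ε / C * (C * Q u) := by gcongr
        _ = ε * Q u := by field_simp
    refine ((summable_prod_pi (fun n => (exp_pos _).le)
      (summable_exp_neg_mul_intCast_sq (div_pos hε hC))).comp_injective he).of_nonneg_of_le
      (fun u => (exp_pos _).le) fun u => ?_
    rw [Function.comp_apply, ← exp_sum, Finset.sum_neg_distrib, ← Finset.mul_sum]
    exact exp_le_exp.mpr (neg_le_neg (hle u))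

lemma isBigO_sqrt_mono {ι : Type*} {f q q' : ι → ℝ} (hf : f =O[⊤] fun u => √(q u))
    (h : ∀ u, q u ≤ q' u) : f =O[⊤] fun u => √(q' u) :=
  hf.trans <| isBigO_of_le _ fun u => by
    simpa only [norm_of_nonneg (sqrt_nonneg _)] using sqrt_le_sqrt (h u)

lemma mul_exp_neg_half_mul_sin_add_sub (Q : QuadraticMap ℤ L ℝ) (f g : L →ₗ[ℤ] ℝ) (t : ℝ)
    (u v : L) :
    f (u + v) * exp (-(1 / 2 * Q (u + v))) * sin (t * g (u + v) / 2) *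
        (f (u - v) * exp (-(1 / 2 * Q (u - v))) * sin (t * g (u - v) / 2)) =
      1 / 2 * ((f u ^ 2 - f v ^ 2) * (cos (t * g v) - cos (t * g u)) *
        (exp (-Q u) * exp (-Q v))) := by
  have hsin := sin_half_add_mul_sin_half_sub (t * g u) (t * g v)
  rw [← mul_add, ← mul_sub, ← map_add, ← map_sub] at hsin
  rw [← exp_neg_half_mul_exp_neg_half, ← hsin, map_add f, map_sub f]
  ring

lemma hasSum_mul_prod {ι κ : Type*} {a : ι → ℝ} {b : κ → ℝ} (ha : Summable a) (hb : Summable b) :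
    HasSum (fun p : ι × κ => a p.1 * b p.2) ((∑' i, a i) * ∑' k, b k) :=
  ha.hasSum.mul hb.hasSum (summable_mul_of_summable_norm ha.norm hb.norm)

-- The difference of the two sides is the nonnegative sum of `tsum_mul_add_sub_nonneg` for
-- `F u = f u * exp (-Q u / 2) * sin (t * g u / 2)`.
lemma tsum_sq_mul_cos_mul_tsum_exp_le [IsAddTorsionFree L] {Q : QuadraticMap ℤ L ℝ}
    (hQ : IsSummableGaussian Q) {f : L →ₗ[ℤ] ℝ} (hf : f =O[⊤] fun u => √(Q u)) (g : L →ₗ[ℤ] ℝ)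
    (t : ℝ) :
    (∑' u, f u ^ 2 * exp (-Q u) * cos (t * g u)) * ∑' u, exp (-Q u) ≤
      (∑' u, f u ^ 2 * exp (-Q u)) * ∑' u, exp (-Q u) * cos (t * g u) := by
  have hw := hQ.summable_exp
  have hfw := hQ.summable_sq_mul_exp hf
  have hwc := summable_mul_of_abs_le_one hw fun u => abs_cos_le_one (t * g u)
  have hfwc := summable_mul_of_abs_le_one hfw fun u => abs_cos_le_one (t * g u)
  have hF : Summable fun u => f u * exp (-(1 / 2 * Q u)) * sin (t * g u / 2) :=
    summable_mul_of_abs_le_one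
      (by simpa only [pow_one] using hQ.summable_pow_mul_exp_mul hf 1 one_half_pos)
      fun u => abs_sin_le_one _
  have hexpand := (((hasSum_mul_prod hfw hwc).add (hasSum_mul_prod hwc hfw)).sub
    ((hasSum_mul_prod hfwc hw).add (hasSum_mul_prod hw hfwc))).mul_left (1 / 2)
  have hnonneg := tsum_mul_add_sub_nonneg hF
  rw [tsum_congr fun p : L × L => mul_exp_neg_half_mul_sin_add_sub Q f g t p.1 p.2,
    (hexpand.congr_fun fun p => by ring).tsum_eq] at hnonneg
  linarith

theorem gaussianSecondMoment_add_smul_sq_le [IsAddTorsionFree L] [Countable L]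
    {Q : QuadraticMap ℤ L ℝ} (hQ : IsSummableGaussian Q) {f : L →ₗ[ℤ] ℝ}
    (hf : f =O[⊤] fun u => √(Q u)) (g : L →ₗ[ℤ] ℝ) {d : ℝ} (hd : 0 ≤ d) :
    gaussianSecondMoment (Q + d • linMulLin g g) f ≤ gaussianSecondMoment Q f := by
  have hQ' : IsSummableGaussian (Q + d • linMulLin g g) := hQ.mono fun u => by
    simpa using mul_nonneg hd (mul_self_nonneg (g u))
  set v : NNReal := (2 * d).toNNReal with hv
  have hexp (u : L) : exp (-(Q + d • linMulLin g g) u) =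
      exp (-Q u) * ∫ t, cos (t * g u) ∂gaussianReal 0 v := by
    rw [integral_cos_mul_gaussianReal, hv, coe_toNNReal _ (by positivity), ← exp_add]
    congr 1
    simp only [add_apply, smul_apply, linMulLin_apply, smul_eq_mul]
    ring
  rw [gaussianSecondMoment, gaussianSecondMoment,
    div_le_div_iff₀ hQ'.tsum_exp_pos hQ.tsum_exp_pos]
  simp_rw [hexp, ← mul_assoc]
  rw [← integral_tsum_mul_cos _ _ hQ.summable_exp,
    ← integral_tsum_mul_cos _ _ (hQ.summable_sq_mul_exp hf), ← integral_mul_const,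
    ← integral_const_mul]
  exact integral_mono
    ((integrable_tsum_mul_cos _ _ (hQ.summable_sq_mul_exp hf)).mul_const _)
    ((integrable_tsum_mul_cos _ _ hQ.summable_exp).const_mul _)
    (tsum_sq_mul_cos_mul_tsum_exp_le hQ hf g)

theorem gaussianSecondMoment_add_sum_sq_le [IsAddTorsionFree L] [Countable L]
    {Q : QuadraticMap ℤ L ℝ} (hQ : IsSummableGaussian Q) {f : L →ₗ[ℤ] ℝ}
    (hf : f =O[⊤] fun u => √(Q u)) {ι : Type*} (s : Finset ι) (g : ι → L →ₗ[ℤ] ℝ) {d : ι → ℝ}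
    (hd : ∀ k, 0 ≤ d k) :
    gaussianSecondMoment (Q + ∑ k ∈ s, d k • linMulLin (g k) (g k)) f ≤
      gaussianSecondMoment Q f := by
  classical
  induction s using Finset.induction_on with
  | empty => simp
  | insert k s hk ih =>
    have hle (u : L) : Q u ≤ (Q + ∑ k ∈ s, d k • linMulLin (g k) (g k)) u := by
      simpa using Finset.sum_nonneg fun k _ => mul_nonneg (hd k) (mul_self_nonneg (g k u))
    rw [Finset.sum_insert hk, add_comm (d k • _), ← add_assoc]
    exact (gaussianSecondMoment_add_smul_sq_le (hQ.mono hle) (isBigO_sqrt_mono hf hle) (g k)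
      (hd k)).trans ih

theorem tendsto_gaussianSecondMoment_add_smul {Q P : QuadraticMap ℤ L ℝ}
    (hQ : IsSummableGaussian Q) (hP : ∀ u, 0 ≤ P u) {f : L → ℝ}
    (hf : f =O[⊤] fun u => √(Q u)) :
    Tendsto (fun ε : ℝ => gaussianSecondMoment (Q + ε • P) f) (𝓝[>] 0)
      (𝓝 (gaussianSecondMoment Q f)) := by
  have hlim {a : L → ℝ} (ha : Summable fun u => a u * exp (-Q u)) :
      Tendsto (fun ε : ℝ => ∑' u, a u * exp (-(Q + ε • P) u)) (𝓝[>] 0)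
        (𝓝 (∑' u, a u * exp (-Q u))) := by
    refine tendsto_tsum_of_dominated_convergence ha.norm (fun u => ?_) ?_
    · have hcont : Continuous fun ε : ℝ => a u * exp (-(Q u + ε * P u)) := by fun_prop
      simpa using (hcont.tendsto 0).mono_left nhdsWithin_le_nhds
    · filter_upwards [self_mem_nhdsWithin] with ε hε u
      have hle : Q u ≤ (Q + ε • P) u := by simpa using mul_nonneg (le_of_lt hε) (hP u)
      simp only [norm_mul, norm_of_nonneg (exp_pos _).le]
      gcongr
  refine (hlim (hQ.summable_sq_mul_exp hf)).div ?_ hQ.tsum_exp_pos.ne'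
  simpa only [one_mul] using hlim (a := fun _ => 1) (by simpa only [one_mul] using hQ.summable_exp)

section Retraction

variable {ρ : L →ₗ[ℤ] L'} {σ : L' →ₗ[ℤ] L} {Q : QuadraticMap ℤ L ℝ} {Q' : QuadraticMap ℤ L' ℝ}

lemma hasSum_mul_of_leftInverse (hσ : Function.LeftInverse ρ σ) {a : L' → ℝ} {b : L → ℝ}
    (ha : Summable a) (hb : Summable b) :
    HasSum (fun u => a (ρ u) * b (u - σ (ρ u))) ((∑' v, a v) * ∑' k : ρ.ker, b k) := by
  let e : L' × ρ.ker ≃ L :=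
    { toFun := fun p => σ p.1 + p.2
      invFun := fun u => (ρ u, ⟨u - σ (ρ u), by simp [hσ (ρ u)]⟩)
      left_inv := by
        rintro ⟨v, k, hk⟩
        rw [LinearMap.mem_ker] at hk
        simp [hσ v, hk]
      right_inv := fun u => by simp }
  rw [← e.hasSum_iff]
  refine (hasSum_mul_prod ha (hb.subtype (ρ.ker : Set L))).congr_fun ?_
  rintro ⟨v, k, hk⟩
  have hρ : ρ (σ v + k) = v := by rw [map_add, hσ v, LinearMap.mem_ker.mp hk, add_zero]
  simp [e, hρ]

/-- For a retraction `ρ` with section `σ`, the form on `L ≅ L' ⊕ ker ρ` which is the orthogonal sum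
of `Q'` and of `ε` times the restriction of `Q` to `ker ρ`. -/
def decoupledForm (ρ : L →ₗ[ℤ] L') (σ : L' →ₗ[ℤ] L) (Q' : QuadraticMap ℤ L' ℝ)
    (Q : QuadraticMap ℤ L ℝ) (ε : ℝ) : QuadraticMap ℤ L ℝ :=
  Q'.comp ρ + ε • Q.comp (LinearMap.id - σ ∘ₗ ρ)

lemma decoupledForm_apply (ε : ℝ) (u : L) :
    decoupledForm ρ σ Q' Q ε u = Q' (ρ u) + ε * Q (u - σ (ρ u)) :=
  rfl

lemma exp_neg_mul_decoupledForm (δ ε : ℝ) (u : L) :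
    exp (-(δ * decoupledForm ρ σ Q' Q ε u)) =
      exp (-(δ * Q' (ρ u))) * exp (-(δ * ε * Q (u - σ (ρ u)))) := by
  rw [decoupledForm_apply, ← exp_add]
  ring_nf

lemma isSummableGaussian_decoupledForm (hσ : Function.LeftInverse ρ σ)
    (hQ' : IsSummableGaussian Q') (hQ : IsSummableGaussian Q) {ε : ℝ} (hε : 0 < ε) :
    IsSummableGaussian (decoupledForm ρ σ Q' Q ε) where
  nonneg u := add_nonneg (hQ'.nonneg _) (mul_nonneg hε.le (hQ.nonneg _))
  summable_exp_mul δ hδ := by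
    simp_rw [exp_neg_mul_decoupledForm]
    exact (hasSum_mul_of_leftInverse hσ (hQ'.summable_exp_mul δ hδ)
      (hQ.summable_exp_mul (δ * ε) (by positivity))).summable

lemma gaussianSecondMoment_decoupledForm (hσ : Function.LeftInverse ρ σ)
    (hQ' : IsSummableGaussian Q') (hQ : IsSummableGaussian Q) {f : L' → ℝ}
    (hf : f =O[⊤] fun v => √(Q' v)) {ε : ℝ} (hε : 0 < ε) :
    gaussianSecondMoment (decoupledForm ρ σ Q' Q ε) (f ∘ ρ) = gaussianSecondMoment Q' f := by
  have hker := hQ.summable_exp_mul ε hε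
  have hker_ne : ∑' k : ρ.ker, exp (-(ε * Q k)) ≠ 0 :=
    ((hker.subtype (ρ.ker : Set L)).tsum_pos (fun _ => (exp_pos _).le) (0 : ρ.ker)
      (exp_pos _)).ne'
  have hexp (u : L) : exp (-decoupledForm ρ σ Q' Q ε u) =
      exp (-Q' (ρ u)) * exp (-(ε * Q (u - σ (ρ u)))) := by
    simpa only [one_mul] using exp_neg_mul_decoupledForm (ρ := ρ) (σ := σ) 1 ε u
  simp only [gaussianSecondMoment, hexp, Function.comp_apply, ← mul_assoc]
  rw [(hasSum_mul_of_leftInverse hσ (hQ'.summable_sq_mul_exp hf) hker).tsum_eq,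
    (hasSum_mul_of_leftInverse hσ hQ'.summable_exp hker).tsum_eq,
    mul_div_mul_right _ _ hker_ne]

-- The form `Q'.comp ρ` is degenerate along `ker ρ`, so it is first completed by `ε` times the
-- restriction of `Q` to `ker ρ`; this does not affect the law of `ρ`, and then `ε` tends to `0`.
theorem gaussianSecondMoment_comp_le_of_leftInverse [IsAddTorsionFree L] [Countable L]
    (hσ : Function.LeftInverse ρ σ) (hQ' : IsSummableGaussian Q') (hQ : IsSummableGaussian Q)
    {ι : Type*} (s : Finset ι) (g : ι → L →ₗ[ℤ] ℝ) {d : ι → ℝ} (hd : ∀ k, 0 ≤ d k)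
    (hsum : Q = Q'.comp ρ + ∑ k ∈ s, d k • linMulLin (g k) (g k))
    {f : L' →ₗ[ℤ] ℝ} (hf : f =O[⊤] fun v => √(Q' v)) :
    gaussianSecondMoment Q (f ∘ ρ) ≤ gaussianSecondMoment Q' f := by
  have hfρ : (f ∘ ρ) =O[⊤] fun u => √(Q' (ρ u)) := hf.comp_tendsto tendsto_top
  have hQ'_le (u : L) : Q' (ρ u) ≤ Q u := by
    have := Finset.sum_nonneg fun k (_ : k ∈ s) => mul_nonneg (hd k) (mul_self_nonneg (g k u))
    simpa [hsum] using this
  let P := Q.comp (LinearMap.id - σ ∘ₗ ρ)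
  refine le_of_tendsto (tendsto_gaussianSecondMoment_add_smul (P := P) hQ
    (fun u => hQ.nonneg _) (isBigO_sqrt_mono hfρ hQ'_le)) ?_
  filter_upwards [self_mem_nhdsWithin] with ε (hε : 0 < ε)
  have hdecoupled_le (u : L) : Q' (ρ u) ≤ decoupledForm ρ σ Q' Q ε u :=
    le_add_of_nonneg_right (mul_nonneg hε.le (hQ.nonneg _))
  have hform : Q + ε • P =
      decoupledForm ρ σ Q' Q ε + ∑ k ∈ s, d k • linMulLin (g k) (g k) := by
    rw [decoupledForm, add_right_comm, ← hsum]
  calc gaussianSecondMoment (Q + ε • P) (f ∘ ρ)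
      ≤ gaussianSecondMoment (decoupledForm ρ σ Q' Q ε) (f ∘ ρ) := by
        rw [hform]
        exact gaussianSecondMoment_add_sum_sq_le (f := f ∘ₗ ρ)
          (isSummableGaussian_decoupledForm hσ hQ' hQ hε) (isBigO_sqrt_mono hfρ hdecoupled_le)
          s g hd
    _ = gaussianSecondMoment Q' f := gaussianSecondMoment_decoupledForm hσ hQ' hQ hf hε

end Retraction

end LatticeGaussian

section GaussianFreeField

open Asymptotics Filter Real
open QuadraticMap (linMulLin linMulLin_apply)

variable {V : Type*}

/-- The observable `φ ↦ φ i`, as a real-valued linear form on height functions. -/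
def height (i : V) : (V → ℤ) →ₗ[ℤ] ℝ := Algebra.linearMap ℤ ℝ ∘ₗ LinearMap.proj i

lemma height_apply (i : V) (φ : V → ℤ) : height i φ = φ i := rfl

/-- The configurations of the integer-valued Gaussian free field, as a lattice: its underlying type
is definitionally `GffConfig c x`. -/
def gffConfigs (c : V → V → ℝ) (x : V) : Submodule ℤ (V → ℤ) where
  carrier := {φ | φ x = 0 ∧ ∀ v, ¬ (supportGraph c).Reachable x v → φ v = 0}
  zero_mem' := ⟨rfl, fun _ _ => rfl⟩
  add_mem' hφ hψ := ⟨by simp [hφ.1, hψ.1], fun v hv => by simp [hφ.2 v hv, hψ.2 v hv]⟩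
  smul_mem' n φ hφ := ⟨by simp [hφ.1], fun v hv => by simp [hφ.2 v hv]⟩

section Support

variable {c c' : V → V → ℝ} {x : V}

lemma supportGraph_mono (hle : ∀ i j, c' i j ≤ c i j) : supportGraph c' ≤ supportGraph c := by
  intro i j h
  rw [supportGraph, SimpleGraph.fromRel_adj] at h ⊢
  exact ⟨h.1, h.2.imp (fun h => h.trans_le (hle i j)) fun h => h.trans_le (hle j i)⟩

lemma gffConfigs_mono (hle : ∀ i j, c' i j ≤ c i j) : gffConfigs c' x ≤ gffConfigs c x :=
  fun _ hφ => ⟨hφ.1, fun v hv => hφ.2 v fun h => hv (h.mono (supportGraph_mono hle))⟩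

/-- The vertices connected to the root, that is, those on which the field lives. -/
def rootComponent (c : V → V → ℝ) (x : V) : Set V := {v | (supportGraph c).Reachable x v}

lemma mem_rootComponent {v : V} : v ∈ rootComponent c x ↔ (supportGraph c).Reachable x v := Iff.rfl

lemma mem_rootComponent_iff_of_pos {i j : V} (h : 0 < c i j) :
    i ∈ rootComponent c x ↔ j ∈ rootComponent c x := by
  obtain rfl | hij := eq_or_ne i j
  · rfl
  have hadj : (supportGraph c).Adj i j := (SimpleGraph.fromRel_adj _ _ _).mpr ⟨hij, .inl h⟩
  exact ⟨fun hi => hi.trans hadj.reachable, fun hj => hj.trans hadj.symm.reachable⟩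

/-- Setting to `0` the heights of the vertices which `c'` does not connect to the root. -/
noncomputable def restrictConfig (c c' : V → V → ℝ) (x : V) :
    gffConfigs c x →ₗ[ℤ] gffConfigs c' x where
  toFun φ := ⟨(rootComponent c' x).indicator φ, by
    classical simp [Set.indicator_apply, φ.2.1],
    fun _ hv => Set.indicator_of_notMem (mem_rootComponent.not.mpr hv) _⟩
  map_add' φ ψ := Subtype.ext (Set.indicator_add _ _ _)
  map_smul' n φ := Subtype.ext (Set.indicator_const_smul _ n (φ : V → ℤ))

lemma coe_restrictConfig (φ : gffConfigs c x) :
    (restrictConfig c c' x φ : V → ℤ) = (rootComponent c' x).indicator φ := rfl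

lemma leftInverse_restrictConfig_inclusion (hle : ∀ i j, c' i j ≤ c i j) :
    Function.LeftInverse (restrictConfig c c' x)
      (Submodule.inclusion (gffConfigs_mono (x := x) hle)) := by
  refine fun φ => Subtype.ext ?_
  rw [coe_restrictConfig, Submodule.coe_inclusion, Set.indicator_eq_self]
  exact fun v hv => not_not.mp fun h => hv (φ.2.2 v h)

end Support

variable [Fintype V] {c c' : V → V → ℝ} {x : V}

/-- The Dirichlet energy with conductances `c`. As in `gffWeight`, the sum is over ordered pairs,
whence the halved conductances. -/
noncomputable def energy (c : V → V → ℝ) : QuadraticMap ℤ (V → ℤ) ℝ :=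
  ∑ p : V × V, (c p.1 p.2 / 2) • linMulLin (height p.1 - height p.2) (height p.1 - height p.2)

lemma energy_apply (c : V → V → ℝ) (φ : V → ℤ) :
    energy c φ = ∑ p : V × V, c p.1 p.2 / 2 * ((φ p.1 : ℝ) - φ p.2) ^ 2 := by
  simp [energy, height_apply, sq]

lemma gffWeight_eq_exp_neg_energy (c : V → V → ℝ) (φ : V → ℤ) :
    gffWeight c φ = exp (-energy c φ) := by
  rw [gffWeight, energy_apply, Fintype.sum_prod_type, Finset.mul_sum]
  simp_rw [Finset.mul_sum]
  push_cast
  ring_nf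

lemma energy_nonneg (hc : ∀ i j, 0 ≤ c i j) (φ : V → ℤ) : 0 ≤ energy c φ := by
  rw [energy_apply]
  exact Finset.sum_nonneg fun p _ => mul_nonneg (div_nonneg (hc _ _) two_pos.le) (sq_nonneg _)

lemma energy_indicator {s : Set V} (hs : ∀ i j, c i j ≠ 0 → (i ∈ s ↔ j ∈ s)) (φ : V → ℤ) :
    energy c (s.indicator φ) = energy (s.indicator c) φ := by
  classical
  simp only [energy_apply]
  refine Finset.sum_congr rfl fun p _ => ?_
  have h := hs p.1 p.2
  by_cases h₁ : p.1 ∈ s <;> by_cases h₂ : p.2 ∈ s <;> simp_all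

lemma isBigO_sqrt_energy_of_pos (hc : ∀ i j, 0 ≤ c i j) {i j : V} (hij : 0 < c i j) :
    (height i - height j) =O[⊤] fun φ => √(energy c φ) := by
  refine isBigO_top.mpr ⟨√(2 / c i j), fun φ => ?_⟩
  have hterm : c i j / 2 * (height i - height j) φ ^ 2 ≤ energy c φ := by
    rw [energy_apply]
    exact Finset.single_le_sum
      (f := fun p : V × V => c p.1 p.2 / 2 * ((φ p.1 : ℝ) - φ p.2) ^ 2)
      (fun p _ => mul_nonneg (div_nonneg (hc _ _) two_pos.le) (sq_nonneg _))
      (Finset.mem_univ (i, j))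
  rw [norm_of_nonneg (sqrt_nonneg _), ← sqrt_mul (by positivity), norm_eq_abs]
  refine abs_le_sqrt ?_
  calc (height i - height j) φ ^ 2
      = 2 / c i j * (c i j / 2 * (height i - height j) φ ^ 2) := by field_simp
    _ ≤ 2 / c i j * energy c φ := by gcongr

lemma isBigO_sqrt_energy_of_reachable (hc : ∀ i j, 0 ≤ c i j) {i j : V}
    (hij : (supportGraph c).Reachable i j) :
    (height i - height j) =O[⊤] fun φ => √(energy c φ) := by
  rw [SimpleGraph.reachable_iff_reflTransGen] at hij
  induction hij with
  | refl => simpa using isBigO_zero (E' := ℝ) (fun φ => √(energy c φ)) ⊤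
  | @tail k l _ hkl ih =>
    have hedge : (height k - height l) =O[⊤] fun φ => √(energy c φ) := by
      obtain ⟨-, h | h⟩ := (SimpleGraph.fromRel_adj _ _ _).mp hkl
      · exact isBigO_sqrt_energy_of_pos hc h
      · simpa using (isBigO_sqrt_energy_of_pos hc h).neg_left
    simpa using ih.add hedge

/-- The Dirichlet energy on the lattice of configurations. -/
noncomputable def gffForm (c : V → V → ℝ) (x : V) : QuadraticMap ℤ (gffConfigs c x) ℝ :=
  (energy c).comp (gffConfigs c x).subtype

lemma isBigO_sqrt_gffForm (hc : ∀ i j, 0 ≤ c i j) (f : (V → ℤ) →ₗ[ℤ] ℝ) :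
    (f ∘ₗ (gffConfigs c x).subtype) =O[⊤] fun φ => √(gffForm c x φ) := by
  classical
  have hheight (v : V) :
      (fun φ : gffConfigs c x => height v φ) =O[⊤] fun φ => √(gffForm c x φ) := by
    by_cases hv : (supportGraph c).Reachable x v
    · refine ((isBigO_sqrt_energy_of_reachable hc hv.symm).comp_tendsto
        (k := (gffConfigs c x).subtype) tendsto_top).congr_left fun φ => ?_
      simp [height_apply, φ.2.1]
    · refine (isBigO_zero _ _).congr_left fun φ => ?_
      simp [height_apply, φ.2.2 v hv]
  have hf (φ : gffConfigs c x) :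
      (f ∘ₗ (gffConfigs c x).subtype) φ =
        ∑ v, f (fun w => if v = w then 1 else 0) * height v φ := by
    rw [LinearMap.comp_apply, LinearMap.pi_apply_eq_sum_univ]
    simp [height_apply, mul_comm]
  exact (IsBigO.fun_sum fun v _ => (hheight v).const_mul_left _).congr_left fun φ => (hf φ).symm

lemma isSummableGaussian_gffForm (hc : ∀ i j, 0 ≤ c i j) : IsSummableGaussian (gffForm c x) :=
  isSummableGaussian_of_isBigO_sqrt (fun φ => energy_nonneg hc φ) Subtype.val_injective
    fun i => isBigO_sqrt_gffForm hc (height i)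

lemma gffRVar_eq_gaussianSecondMoment (c : V → V → ℝ) (x : V) (f : (V → ℤ) →ₗ[ℤ] ℝ) :
    gffRVar c x f = gaussianSecondMoment (gffForm c x) (f ∘ₗ (gffConfigs c x).subtype) := by
  have hmean : ∑' φ : GffConfig c x, f φ.val * gffWeight c φ.val = 0 :=
    tsum_eq_zero_of_odd (L := gffConfigs c x)
      (F := fun φ => f φ * gffWeight c φ) fun φ => by simp [gffWeight_eq_exp_neg_energy]
  rw [gffRVar, hmean, zero_div, zero_pow two_ne_zero, sub_zero]
  simp_rw [gffZ, gffWeight_eq_exp_neg_energy]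
  rfl

lemma gffForm_eq_comp_add_sum (hc' : ∀ i j, 0 ≤ c' i j) :
    gffForm c x = (gffForm c' x).comp (restrictConfig c c' x) +
      ∑ p : V × V, ((c p.1 p.2 - (rootComponent c' x).indicator c' p.1 p.2) / 2) •
        linMulLin ((height p.1 - height p.2) ∘ₗ (gffConfigs c x).subtype)
          ((height p.1 - height p.2) ∘ₗ (gffConfigs c x).subtype) := by
  ext φ
  have hrestr : gffForm c' x (restrictConfig c c' x φ) =
      energy ((rootComponent c' x).indicator c') φ :=
    energy_indicator (fun i j h => mem_rootComponent_iff_of_pos ((hc' i j).lt_of_ne' h)) φ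
  have hsub : energy c φ = energy ((rootComponent c' x).indicator c') φ +
      energy (fun i j => c i j - (rootComponent c' x).indicator c' i j) φ := by
    simp only [energy_apply, ← Finset.sum_add_distrib]
    exact Finset.sum_congr rfl fun p _ => by ring
  rw [add_apply, QuadraticMap.comp_apply, hrestr]
  calc gffForm c x φ = energy c φ := rfl
    _ = _ := hsub
    _ = _ := by simp [energy]

theorem gffRVar_le_of_le (hc' : ∀ i j, 0 ≤ c' i j) (hle : ∀ i j, c' i j ≤ c i j)
    {f : (V → ℤ) →ₗ[ℤ] ℝ} (hf : ∀ φ, f ((rootComponent c' x).indicator φ) = f φ) :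
    gffRVar c x f ≤ gffRVar c' x f := by
  have hrestr : f ∘ₗ (gffConfigs c x).subtype =
      (f ∘ₗ (gffConfigs c' x).subtype) ∘ₗ restrictConfig c c' x :=
    LinearMap.ext fun φ => (hf φ).symm
  have hindicator (i j : V) : (rootComponent c' x).indicator c' i j ≤ c i j :=
    ((Set.indicator_le_self' fun k _ => hc' k : _ ≤ c') i j).trans (hle i j)
  have : IsAddTorsionFree (gffConfigs c x) :=
    inferInstanceAs (IsAddTorsionFree (gffConfigs c x).toAddSubgroup)
  rw [gffRVar_eq_gaussianSecondMoment, gffRVar_eq_gaussianSecondMoment, hrestr]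
  exact gaussianSecondMoment_comp_le_of_leftInverse (leftInverse_restrictConfig_inclusion hle)
    (isSummableGaussian_gffForm hc')
    (isSummableGaussian_gffForm fun i j => (hc' i j).trans (hle i j)) Finset.univ
    (fun p : V × V => (height p.1 - height p.2) ∘ₗ (gffConfigs c x).subtype)
    (d := fun p => (c p.1 p.2 - (rootComponent c' x).indicator c' p.1 p.2) / 2)
    (fun p => div_nonneg (sub_nonneg.mpr (hindicator p.1 p.2)) two_pos.le)
    (gffForm_eq_comp_add_sum hc') (isBigO_sqrt_gffForm hc' f)

end GaussianFreeField

theorem gff_variance_monotone_in_conductances_general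
    {V : Type*} [Fintype V] (x : V) {c c' : V → V → ℝ}
    (hnn' : ∀ i j, 0 ≤ c' i j) (hle : ∀ i j, c' i j ≤ c i j) :
    (∀ i : V, gffVar1 c x i ≤ gffVar1 c' x i) ∧
      (∀ i j : V, gffVar2 c x i j ≤ gffVar2 c' x i j) := by
  have hmono {v : V} (hv : (supportGraph c').Reachable x v) : (supportGraph c).Reachable x v :=
    hv.mono (supportGraph_mono hle)
  have hheight {v : V} (hv : (supportGraph c').Reachable x v) (φ : V → ℤ) :
      height v ((rootComponent c' x).indicator φ) = height v φ :=
    congrArg Int.cast (Set.indicator_of_mem (mem_rootComponent.mpr hv) φ)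
  refine ⟨fun i => ?_, fun i j => ?_⟩
  · by_cases hi : (supportGraph c').Reachable x i
    · rw [gffVar1, gffVar1, if_pos hi, if_pos (hmono hi)]
      exact ENNReal.ofReal_le_ofReal (gffRVar_le_of_le hnn' hle (f := height i) (hheight hi))
    · simp only [gffVar1, if_neg hi, le_top]
  · by_cases hij : (supportGraph c').Reachable x i ∧ (supportGraph c').Reachable x j
    · rw [gffVar2, gffVar2, if_pos hij, if_pos (hij.imp hmono hmono)]
      exact ENNReal.ofReal_le_ofReal <| gffRVar_le_of_le hnn' hle (f := height i - height j)
        fun φ => congrArg₂ (· - ·) (hheight hij.1 φ) (hheight hij.2 φ)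
    · simp only [gffVar2, if_neg hij, le_top]

/-- **Monotonicity of the variances in the conductances.**
Let `G = (V,E,x)` be a finite connected rooted graph and let `λ ⪰ λ'` be two collections
of conductances in `(0,∞)^E` (encoded here as symmetric functions `c, c' : V → V → ℝ`
which are positive exactly on the (same) edge set, vanish elsewhere, and satisfy
`c' ≤ c` pointwise, the support graph being connected). Then for every `i ∈ V`
the variance of `φ(i)` is decreasing in the conductances, and likewise for every
`i, j ∈ V` the variance of `φ(i) − φ(j)` is decreasing in the conductances. -/
theorem gff_variance_monotone_in_conductances
    {V : Type*} [Fintype V] (x : V) (c c' : V → V → ℝ)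
    (hsym : ∀ i j, c i j = c j i) (hsym' : ∀ i j, c' i j = c' j i)
    (hnn' : ∀ i j, 0 ≤ c' i j)
    (hle : ∀ i j, c' i j ≤ c i j)
    (hsupp : ∀ i j, 0 < c i j ↔ 0 < c' i j)
    (hconn : (supportGraph c).Connected) :
    (∀ i : V, gffVar1 c x i ≤ gffVar1 c' x i) ∧
      (∀ i j : V, gffVar2 c x i j ≤ gffVar2 c' x i j) :=
  gff_variance_monotone_in_conductances_general x hnn' hle
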